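/- Let h_∞ > 0 be a constant, let h > 0 and ū be smooth on [0,T] × ℝ² satisfying the full 2D Serre–Green–Naghdi system (mass equation h_t + ∇·(h ū) = 0 and momentum equations ∂_t(h ū_i) + Σ_{j=1,2} ∂_j(h ū_i ū_j + p δ_{ij}) = 0, i = 1,2, with p = g h²/2 + (h²/3) ḧ), and suppose there is a compact set K ⊂ ℝ² such that for every t ∈ [0,T] the functions x ↦ h(t,x) − h_∞ and x ↦ ū(t,x) are supported in K. Then, with σ = (h²/3) ḣ, the total energy ℰ(t) = ∬_{ℝ²} ( h|ū|²/2 + 3σ²/(2h³) + g(h − h_∞)²/2 ) dx dy is constant in t on [0,T]. -/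

import Mathlib

open MeasureTheory

noncomputable section

/-- Partial derivative in the time variable of a function of `(t, x, y)`. -/
def pT (f : ℝ → ℝ → ℝ → ℝ) : ℝ → ℝ → ℝ → ℝ := fun t x y => deriv (fun s => f s x y) t

/-- Partial derivative in the first space variable of a function of `(t, x, y)`. -/
def pX (f : ℝ → ℝ → ℝ → ℝ) : ℝ → ℝ → ℝ → ℝ := fun t x y => deriv (fun s => f t s y) x

/-- Partial derivative in the second space variable of a function of `(t, x, y)`. -/
def pY (f : ℝ → ℝ → ℝ → ℝ) : ℝ → ℝ → ℝ → ℝ := fun t x y => deriv (fun s => f t x s) y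

/-- Smoothness of a function of `(t, x, y)` on `[0,T] × ℝ²`. -/
def Smooth3On (f : ℝ → ℝ → ℝ → ℝ) (T : ℝ) : Prop :=
  ContDiffOn ℝ (⊤ : ℕ∞) (fun q : ℝ × ℝ × ℝ => f q.1 q.2.1 q.2.2)
    (Set.Icc 0 T ×ˢ (Set.univ : Set (ℝ × ℝ)))

/-- Smoothness of a function of `(t, x, y)` on the slab `I × ℝ²`. -/
def SmoothOnSlab (f : ℝ → ℝ → ℝ → ℝ) (I : Set ℝ) : Prop :=
  ContDiffOn ℝ (⊤ : ℕ∞) (fun q : ℝ × ℝ × ℝ => f q.1 q.2.1 q.2.2)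
    (I ×ˢ (Set.univ : Set (ℝ × ℝ)))

namespace SmoothOnSlab

variable {f k : ℝ → ℝ → ℝ → ℝ} {I J : Set ℝ} {t : ℝ}

theorem mono (hf : SmoothOnSlab f I) (hJ : J ⊆ I) : SmoothOnSlab f J :=
  ContDiffOn.mono hf (Set.prod_mono_left hJ)

theorem congr (hf : SmoothOnSlab f I) (hk : ∀ t ∈ I, ∀ x y, k t x y = f t x y) :
    SmoothOnSlab k I :=
  ContDiffOn.congr hf fun q hq => hk q.1 hq.1 q.2.1 q.2.2

theorem const (c : ℝ) : SmoothOnSlab (fun _ _ _ => c) I := contDiffOn_const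

theorem add (hf : SmoothOnSlab f I) (hk : SmoothOnSlab k I) :
    SmoothOnSlab (fun t x y => f t x y + k t x y) I :=
  ContDiffOn.add hf hk

theorem mul (hf : SmoothOnSlab f I) (hk : SmoothOnSlab k I) :
    SmoothOnSlab (fun t x y => f t x y * k t x y) I :=
  ContDiffOn.mul hf hk

theorem neg (hf : SmoothOnSlab f I) : SmoothOnSlab (fun t x y => -f t x y) I :=
  ContDiffOn.neg hf

theorem hasDerivAt_comp (hf : SmoothOnSlab f I) {c : ℝ → ℝ × ℝ × ℝ} {v : ℝ × ℝ × ℝ} {s : ℝ}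
    (hc : HasDerivAt c v s) (hs : c s ∈ I ×ˢ (Set.univ : Set (ℝ × ℝ)))
    (hI : ∀ᶠ r in nhds s, (c r).1 ∈ I) :
    HasDerivAt (fun r => f (c r).1 (c r).2.1 (c r).2.2)
      (fderivWithin ℝ (fun q : ℝ × ℝ × ℝ => f q.1 q.2.1 q.2.2)
        (I ×ˢ (Set.univ : Set (ℝ × ℝ))) (c s) v) s :=
  ((ContDiffOn.differentiableOn hf (by simp) _ hs).hasFDerivWithinAt).comp_hasDerivAt s hc
    (hI.mono fun _ hr => ⟨hr, trivial⟩)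

theorem hasDerivAt_fderivWithin_fst (hf : SmoothOnSlab f I) (ht : t ∈ I) (x y : ℝ) :
    HasDerivAt (fun s => f t s y)
      (fderivWithin ℝ (fun q : ℝ × ℝ × ℝ => f q.1 q.2.1 q.2.2)
        (I ×ˢ (Set.univ : Set (ℝ × ℝ))) (t, x, y) (0, 1, 0)) x :=
  hf.hasDerivAt_comp (c := fun s => (t, s, y))
    ((hasDerivAt_const x t).prodMk ((hasDerivAt_id x).prodMk (hasDerivAt_const x y)))
    ⟨ht, trivial⟩ (Filter.Eventually.of_forall fun _ => ht)

theorem hasDerivAt_fderivWithin_snd (hf : SmoothOnSlab f I) (ht : t ∈ I) (x y : ℝ) :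
    HasDerivAt (fun s => f t x s)
      (fderivWithin ℝ (fun q : ℝ × ℝ × ℝ => f q.1 q.2.1 q.2.2)
        (I ×ˢ (Set.univ : Set (ℝ × ℝ))) (t, x, y) (0, 0, 1)) y :=
  hf.hasDerivAt_comp (c := fun s => (t, x, s))
    ((hasDerivAt_const y t).prodMk ((hasDerivAt_const y x).prodMk (hasDerivAt_id y)))
    ⟨ht, trivial⟩ (Filter.Eventually.of_forall fun _ => ht)

theorem hasDerivAt_fderivWithin_time (hf : SmoothOnSlab f I) (hI : IsOpen I) (ht : t ∈ I)
    (x y : ℝ) :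
    HasDerivAt (fun s => f s x y)
      (fderivWithin ℝ (fun q : ℝ × ℝ × ℝ => f q.1 q.2.1 q.2.2)
        (I ×ˢ (Set.univ : Set (ℝ × ℝ))) (t, x, y) (1, 0, 0)) t :=
  hf.hasDerivAt_comp (c := fun s => (s, x, y))
    ((hasDerivAt_id t).prodMk ((hasDerivAt_const t x).prodMk (hasDerivAt_const t y)))
    ⟨ht, trivial⟩ (hI.mem_nhds ht)

theorem hasDerivAt_pX (hf : SmoothOnSlab f I) (ht : t ∈ I) (x y : ℝ) :
    HasDerivAt (fun s => f t s y) (pX f t x y) x :=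
  (hf.hasDerivAt_fderivWithin_fst ht x y).differentiableAt.hasDerivAt

theorem hasDerivAt_pY (hf : SmoothOnSlab f I) (ht : t ∈ I) (x y : ℝ) :
    HasDerivAt (fun s => f t x s) (pY f t x y) y :=
  (hf.hasDerivAt_fderivWithin_snd ht x y).differentiableAt.hasDerivAt

theorem hasDerivAt_pT (hf : SmoothOnSlab f I) (hI : IsOpen I) (ht : t ∈ I) (x y : ℝ) :
    HasDerivAt (fun s => f s x y) (pT f t x y) t :=
  (hf.hasDerivAt_fderivWithin_time hI ht x y).differentiableAt.hasDerivAt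

theorem contDiffOn_fderivWithin_apply (hf : SmoothOnSlab f I) (hI : UniqueDiffOn ℝ I)
    (v : ℝ × ℝ × ℝ) :
    ContDiffOn ℝ (⊤ : ℕ∞) (fun q : ℝ × ℝ × ℝ =>
      fderivWithin ℝ (fun q : ℝ × ℝ × ℝ => f q.1 q.2.1 q.2.2)
        (I ×ˢ (Set.univ : Set (ℝ × ℝ))) q v) (I ×ˢ (Set.univ : Set (ℝ × ℝ))) :=
  (ContDiffOn.fderivWithin hf (hI.prod uniqueDiffOn_univ) (by simp)).clm_apply contDiffOn_const

protected theorem pX (hf : SmoothOnSlab f I) (hI : UniqueDiffOn ℝ I) : SmoothOnSlab (pX f) I :=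
  (hf.contDiffOn_fderivWithin_apply hI (0, 1, 0)).congr fun q hq =>
    (hf.hasDerivAt_fderivWithin_fst hq.1 q.2.1 q.2.2).deriv

protected theorem pY (hf : SmoothOnSlab f I) (hI : UniqueDiffOn ℝ I) : SmoothOnSlab (pY f) I :=
  (hf.contDiffOn_fderivWithin_apply hI (0, 0, 1)).congr fun q hq =>
    (hf.hasDerivAt_fderivWithin_snd hq.1 q.2.1 q.2.2).deriv

protected theorem pT (hf : SmoothOnSlab f I) (hI : IsOpen I) : SmoothOnSlab (pT f) I :=
  (hf.contDiffOn_fderivWithin_apply hI.uniqueDiffOn (1, 0, 0)).congr fun q hq =>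
    (hf.hasDerivAt_fderivWithin_time hI hq.1 q.2.1 q.2.2).deriv

theorem continuous_slice (hf : SmoothOnSlab f I) (ht : t ∈ I) :
    Continuous fun q : ℝ × ℝ => f t q.1 q.2 :=
  ContinuousOn.comp_continuous (ContDiffOn.continuousOn hf)
    (f := fun q : ℝ × ℝ => (t, q.1, q.2)) (by fun_prop) fun _ => ⟨ht, trivial⟩

end SmoothOnSlab

theorem pX_eq_zero_of_notMem {f : ℝ → ℝ → ℝ → ℝ} {t : ℝ} {K : Set (ℝ × ℝ)} (hK : IsClosed K)
    (hf : ∀ q ∉ K, f t q.1 q.2 = 0) {q : ℝ × ℝ} (hq : q ∉ K) : pX f t q.1 q.2 = 0 := by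
  have hnear : ∀ᶠ s in nhds q.1, (s, q.2) ∈ Kᶜ :=
    (Continuous.prodMk_left q.2).continuousAt.eventually_mem (hK.isOpen_compl.mem_nhds hq)
  have heq : (fun s => f t s q.2) =ᶠ[nhds q.1] fun _ => 0 := hnear.mono fun s hs => hf _ hs
  simpa [pX] using heq.deriv_eq

theorem pY_eq_zero_of_notMem {f : ℝ → ℝ → ℝ → ℝ} {t : ℝ} {K : Set (ℝ × ℝ)} (hK : IsClosed K)
    (hf : ∀ q ∉ K, f t q.1 q.2 = 0) {q : ℝ × ℝ} (hq : q ∉ K) : pY f t q.1 q.2 = 0 := by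
  have hnear : ∀ᶠ s in nhds q.2, (q.1, s) ∈ Kᶜ :=
    (Continuous.prodMk_right q.1).continuousAt.eventually_mem (hK.isOpen_compl.mem_nhds hq)
  have heq : (fun s => f t q.1 s) =ᶠ[nhds q.2] fun _ => 0 := hnear.mono fun s hs => hf _ hs
  simpa [pY] using heq.deriv_eq

theorem pT_eq_zero_of_forall_mem {f : ℝ → ℝ → ℝ → ℝ} {I : Set ℝ} (hI : IsOpen I) {t : ℝ}
    (ht : t ∈ I) {x y : ℝ} (hf : ∀ s ∈ I, f s x y = 0) : pT f t x y = 0 := by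
  have heq : (fun s => f s x y) =ᶠ[nhds t] fun _ => 0 :=
    Filter.Eventually.mono (hI.mem_nhds ht) hf
  simpa [pT] using heq.deriv_eq

theorem integral_eq_zero_of_hasDerivAt_fst {f f' : ℝ × ℝ → ℝ} {K : Set (ℝ × ℝ)}
    (hK : IsCompact K) (hf : Continuous f) (hf' : Continuous f') (hfK : ∀ q ∉ K, f q = 0)
    (hfK' : ∀ q ∉ K, f' q = 0)
    (hderiv : ∀ x y, HasDerivAt (fun s => f (s, y)) (f' (x, y)) x) : ∫ q, f' q = 0 := by
  have hint : Integrable f' := hf'.integrable_of_hasCompactSupport (.intro hK hfK')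
  have slice : ∀ {k : ℝ × ℝ → ℝ}, Continuous k → (∀ q ∉ K, k q = 0) → ∀ y,
      Integrable fun x => k (x, y) := fun {k} hk hkK y =>
    (hk.comp (Continuous.prodMk_left y)).integrable_of_hasCompactSupport
      (.intro (hK.image continuous_fst) fun x hx => hkK _ fun hq => hx ⟨_, hq, rfl⟩)
  rw [Measure.volume_eq_prod, integral_prod_symm _ hint]
  simp [fun y => integral_eq_zero_of_hasDerivAt_of_integrable (fun x => hderiv x y)
    (slice hf' hfK' y) (slice hf hfK y)]

theorem integral_eq_zero_of_hasDerivAt_snd {f f' : ℝ × ℝ → ℝ} {K : Set (ℝ × ℝ)}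
    (hK : IsCompact K) (hf : Continuous f) (hf' : Continuous f') (hfK : ∀ q ∉ K, f q = 0)
    (hfK' : ∀ q ∉ K, f' q = 0)
    (hderiv : ∀ x y, HasDerivAt (fun s => f (x, s)) (f' (x, y)) y) : ∫ q, f' q = 0 := by
  have hswap : ∀ {k : ℝ × ℝ → ℝ}, (∀ q ∉ K, k q = 0) →
      ∀ q ∉ Prod.swap '' K, k q.swap = 0 := fun hk q hq =>
    hk _ fun hq' => hq ⟨_, hq', q.swap_swap⟩
  rw [Measure.volume_eq_prod, ← integral_prod_swap]
  exact integral_eq_zero_of_hasDerivAt_fst (hK.image continuous_swap) (hf.comp continuous_swap)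
    (hf'.comp continuous_swap) (hswap hfK) (hswap hfK') fun x y => hderiv y x

/-- Differentiation under the integral sign for smooth functions supported in a fixed compact
set. -/
theorem SmoothOnSlab.hasDerivAt_integral {f : ℝ → ℝ → ℝ → ℝ} {I : Set ℝ}
    (hf : SmoothOnSlab f I) (hI : IsOpen I) {K : Set (ℝ × ℝ)} (hK : IsCompact K)
    (hfK : ∀ t ∈ I, ∀ q ∉ K, f t q.1 q.2 = 0) {t : ℝ} (ht : t ∈ I) :
    HasDerivAt (fun s => ∫ q : ℝ × ℝ, f s q.1 q.2) (∫ q : ℝ × ℝ, pT f t q.1 q.2) t := by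
  obtain ⟨ε, hε, hεI⟩ := Metric.nhds_basis_closedBall.mem_iff.1 (hI.mem_nhds ht)
  have hpT := hf.pT hI
  obtain ⟨C, hC⟩ := ((isCompact_closedBall t ε).prod hK).exists_bound_of_continuousOn
    ((ContDiffOn.continuousOn hpT).mono (Set.prod_mono hεI (Set.subset_univ _)))
  refine (hasDerivAt_integral_of_dominated_loc_of_deriv_le
    (F := fun s (q : ℝ × ℝ) => f s q.1 q.2) (F' := fun s (q : ℝ × ℝ) => pT f s q.1 q.2)
    (bound := K.indicator fun _ => C) (Metric.closedBall_mem_nhds t hε)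
    (Filter.Eventually.mono (hI.mem_nhds ht) fun s hs =>
      (hf.continuous_slice hs).aestronglyMeasurable)
    ((hf.continuous_slice ht).integrable_of_hasCompactSupport (.intro hK (hfK t ht)))
    (hpT.continuous_slice ht).aestronglyMeasurable (.of_forall fun q s hs => ?_)
    ((integrable_indicator_iff hK.measurableSet).2
      (integrableOn_const (hK.measure_lt_top.ne)))
    (.of_forall fun q s hs => hf.hasDerivAt_pT hI (hεI hs) q.1 q.2)).2
  by_cases hq : q ∈ K
  · simpa [hq] using hC (s, q) ⟨hs, hq⟩
  · simp [hq, pT_eq_zero_of_forall_mem hI (hεI hs) fun r hr => hfK r hr q hq]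

/-- A local conservation law with compactly supported fluxes has a conserved integral. -/
theorem SmoothOnSlab.integral_eq_of_conservation_law {e F G : ℝ → ℝ → ℝ → ℝ} {T : ℝ}
    {K : Set (ℝ × ℝ)} (hK : IsCompact K) (he : SmoothOnSlab e (Set.Icc 0 T))
    (hF : SmoothOnSlab F (Set.Ioo 0 T)) (hG : SmoothOnSlab G (Set.Ioo 0 T))
    (heK : ∀ t ∈ Set.Icc 0 T, ∀ q ∉ K, e t q.1 q.2 = 0)
    (hFK : ∀ t ∈ Set.Ioo 0 T, ∀ q ∉ K, F t q.1 q.2 = 0)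
    (hGK : ∀ t ∈ Set.Ioo 0 T, ∀ q ∉ K, G t q.1 q.2 = 0)
    (hlaw : ∀ t ∈ Set.Ioo 0 T, ∀ x y, pT e t x y + pX F t x y + pY G t x y = 0) :
    ∀ t₁ ∈ Set.Icc 0 T, ∀ t₂ ∈ Set.Icc 0 T,
      ∫ q : ℝ × ℝ, e t₁ q.1 q.2 = ∫ q : ℝ × ℝ, e t₂ q.1 q.2 := by
  have hcont : ContinuousOn (fun t => ∫ q : ℝ × ℝ, e t q.1 q.2) (Set.Icc 0 T) :=
    continuousOn_integral_of_compact_support hK (ContDiffOn.continuousOn he)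
      fun t q ht hq => heK t ht q hq
  have hderiv : ∀ t ∈ Set.Ioo 0 T, HasDerivAt (fun t => ∫ q : ℝ × ℝ, e t q.1 q.2) 0 t := by
    intro t ht
    have hpX := (hF.pX isOpen_Ioo.uniqueDiffOn).continuous_slice ht
    have hpY := (hG.pY isOpen_Ioo.uniqueDiffOn).continuous_slice ht
    have hpXK : ∀ q ∉ K, pX F t q.1 q.2 = 0 := fun q =>
      pX_eq_zero_of_notMem hK.isClosed (hFK t ht)
    have hpYK : ∀ q ∉ K, pY G t q.1 q.2 = 0 := fun q =>
      pY_eq_zero_of_notMem hK.isClosed (hGK t ht)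
    have hzero : ∫ q : ℝ × ℝ, pT e t q.1 q.2 = 0 := by
      have hpT : ∀ q : ℝ × ℝ, pT e t q.1 q.2 = -(pX F t q.1 q.2 + pY G t q.1 q.2) := fun q => by
        linarith [hlaw t ht q.1 q.2]
      simp_rw [hpT]
      rw [integral_neg, integral_add (hpX.integrable_of_hasCompactSupport (.intro hK hpXK))
        (hpY.integrable_of_hasCompactSupport (.intro hK hpYK)),
        integral_eq_zero_of_hasDerivAt_fst hK (hF.continuous_slice ht) hpX (hFK t ht) hpXK
          (hF.hasDerivAt_pX ht),
        integral_eq_zero_of_hasDerivAt_snd hK (hG.continuous_slice ht) hpY (hGK t ht) hpYK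
          (hG.hasDerivAt_pY ht)]
      simp
    exact hzero ▸ (he.mono Set.Ioo_subset_Icc_self).hasDerivAt_integral isOpen_Ioo hK
      (fun s hs => heK s (Set.Ioo_subset_Icc_self hs)) ht
  have hlt : ∀ t₁ ∈ Set.Icc 0 T, ∀ t₂ ∈ Set.Icc 0 T, t₁ < t₂ →
      ∫ q : ℝ × ℝ, e t₁ q.1 q.2 = ∫ q : ℝ × ℝ, e t₂ q.1 q.2 := by
    intro t₁ h₁ t₂ h₂ h₁₂
    obtain ⟨c, -, hc⟩ := exists_hasDerivAt_eq_slope _ (fun _ => 0) h₁₂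
      (hcont.mono (Set.Icc_subset_Icc h₁.1 h₂.2))
      fun t ht => hderiv t ⟨h₁.1.trans_lt ht.1, ht.2.trans_le h₂.2⟩
    rw [eq_comm, div_eq_zero_iff] at hc
    rcases hc with hc | hc <;> linarith
  intro t₁ h₁ t₂ h₂
  rcases lt_trichotomy t₁ t₂ with h₁₂ | rfl | h₁₂
  · exact hlt t₁ h₁ t₂ h₂ h₁₂
  · rfl
  · exact (hlt t₂ h₂ t₁ h₁ h₁₂).symm

/-- If smooth `h > 0`, `ū = (u1, u2)` satisfy the full 2D Serre–Green–Naghdi system on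
`[0,T] × ℝ²` and `h − h_∞`, `ū` are spatially supported in a fixed compact set `K`,
then, with `σ = (h²/3)ḣ`, the total energy
`ℰ(t) = ∬ ( h|ū|²/2 + 3σ²/(2h³) + g(h − h_∞)²/2 ) dx dy` is constant on `[0,T]`. -/
theorem sgn2d_total_energy_conservation
    (g hinf T : ℝ) (hg : 0 < g) (hinf_pos : 0 < hinf) (hT : 0 < T)
    (h u1 u2 : ℝ → ℝ → ℝ → ℝ)
    (h_smooth : Smooth3On h T) (u1_smooth : Smooth3On u1 T) (u2_smooth : Smooth3On u2 T)
    (h_pos : ∀ t x y, 0 < h t x y)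
    (hdot : ℝ → ℝ → ℝ → ℝ)
    (hdot_def : hdot = fun t x y =>
      pT h t x y + u1 t x y * pX h t x y + u2 t x y * pY h t x y)
    (hddot : ℝ → ℝ → ℝ → ℝ)
    (hddot_def : hddot = fun t x y =>
      pT hdot t x y + u1 t x y * pX hdot t x y + u2 t x y * pY hdot t x y)
    (p : ℝ → ℝ → ℝ → ℝ)
    (p_def : p = fun t x y => g * (h t x y) ^ 2 / 2 + (h t x y) ^ 2 / 3 * hddot t x y)
    (σ : ℝ → ℝ → ℝ → ℝ)
    (σ_def : σ = fun t x y => (h t x y) ^ 2 / 3 * hdot t x y)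
    (K : Set (ℝ × ℝ)) (K_compact : IsCompact K)
    (h_supp : ∀ t ∈ Set.Icc (0 : ℝ) T,
      Function.support (fun q : ℝ × ℝ => h t q.1 q.2 - hinf) ⊆ K)
    (u1_supp : ∀ t ∈ Set.Icc (0 : ℝ) T,
      Function.support (fun q : ℝ × ℝ => u1 t q.1 q.2) ⊆ K)
    (u2_supp : ∀ t ∈ Set.Icc (0 : ℝ) T,
      Function.support (fun q : ℝ × ℝ => u2 t q.1 q.2) ⊆ K)
    (mass : ∀ t ∈ Set.Icc (0 : ℝ) T, ∀ x y : ℝ,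
      pT h t x y + pX (fun t x y => h t x y * u1 t x y) t x y
        + pY (fun t x y => h t x y * u2 t x y) t x y = 0)
    (mom1 : ∀ t ∈ Set.Icc (0 : ℝ) T, ∀ x y : ℝ,
      pT (fun t x y => h t x y * u1 t x y) t x y
        + pX (fun t x y => h t x y * u1 t x y * u1 t x y + p t x y) t x y
        + pY (fun t x y => h t x y * u1 t x y * u2 t x y) t x y = 0)
    (mom2 : ∀ t ∈ Set.Icc (0 : ℝ) T, ∀ x y : ℝ,
      pT (fun t x y => h t x y * u2 t x y) t x y
        + pX (fun t x y => h t x y * u2 t x y * u1 t x y) t x y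
        + pY (fun t x y => h t x y * u2 t x y * u2 t x y + p t x y) t x y = 0) :
    ∀ t₁ ∈ Set.Icc (0 : ℝ) T, ∀ t₂ ∈ Set.Icc (0 : ℝ) T,
      (∫ q : ℝ × ℝ,
          (h t₁ q.1 q.2 * ((u1 t₁ q.1 q.2) ^ 2 + (u2 t₁ q.1 q.2) ^ 2) / 2
            + 3 * (σ t₁ q.1 q.2) ^ 2 / (2 * (h t₁ q.1 q.2) ^ 3)
            + g * (h t₁ q.1 q.2 - hinf) ^ 2 / 2))
        = ∫ q : ℝ × ℝ,
            (h t₂ q.1 q.2 * ((u1 t₂ q.1 q.2) ^ 2 + (u2 t₂ q.1 q.2) ^ 2) / 2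
              + 3 * (σ t₂ q.1 q.2) ^ 2 / (2 * (h t₂ q.1 q.2) ^ 3)
              + g * (h t₂ q.1 q.2 - hinf) ^ 2 / 2) := by
  have h_s : SmoothOnSlab h (Set.Icc 0 T) := h_smooth
  have u1_s : SmoothOnSlab u1 (Set.Icc 0 T) := u1_smooth
  have u2_s : SmoothOnSlab u2 (Set.Icc 0 T) := u2_smooth
  have hIcc : UniqueDiffOn ℝ (Set.Icc 0 T) := uniqueDiffOn_Icc hT
  have hsub : Set.Ioo 0 T ⊆ Set.Icc 0 T := Set.Ioo_subset_Icc_self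
  have hIoo : IsOpen (Set.Ioo 0 T) := isOpen_Ioo
  have h_off : ∀ t ∈ Set.Icc 0 T, ∀ q ∉ K, h t q.1 q.2 = hinf := fun t ht q hq =>
    sub_eq_zero.1 (Function.notMem_support.1 fun hs => hq (h_supp t ht hs))
  have u1_off : ∀ t ∈ Set.Icc 0 T, ∀ q ∉ K, u1 t q.1 q.2 = 0 := fun t ht q hq =>
    Function.notMem_support.1 fun hs => hq (u1_supp t ht hs)
  have u2_off : ∀ t ∈ Set.Icc 0 T, ∀ q ∉ K, u2 t q.1 q.2 = 0 := fun t ht q hq =>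
    Function.notMem_support.1 fun hs => hq (u2_supp t ht hs)
  -- The mass equation determines `pT h` even at the end points of the time interval.
  have hdot_eq : ∀ t ∈ Set.Icc 0 T, ∀ x y,
      hdot t x y = -(h t x y * (pX u1 t x y + pY u2 t x y)) := by
    intro t ht x y
    have hX : pX (fun t x y => h t x y * u1 t x y) t x y
        = pX h t x y * u1 t x y + h t x y * pX u1 t x y :=
      ((h_s.hasDerivAt_pX ht x y).mul (u1_s.hasDerivAt_pX ht x y)).deriv
    have hY : pY (fun t x y => h t x y * u2 t x y) t x y
        = pY h t x y * u2 t x y + h t x y * pY u2 t x y :=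
      ((h_s.hasDerivAt_pY ht x y).mul (u2_s.hasDerivAt_pY ht x y)).deriv
    have hm := mass t ht x y
    rw [hX, hY] at hm
    rw [hdot_def]
    linear_combination hm
  have hdot_s : SmoothOnSlab hdot (Set.Icc 0 T) :=
    (h_s.mul ((u1_s.pX hIcc).add (u2_s.pY hIcc))).neg.congr hdot_eq
  have hdot_off : ∀ t ∈ Set.Icc 0 T, ∀ q ∉ K, hdot t q.1 q.2 = 0 := fun t ht q hq => by
    rw [hdot_eq t ht, pX_eq_zero_of_notMem K_compact.isClosed (u1_off t ht) hq,
      pY_eq_zero_of_notMem K_compact.isClosed (u2_off t ht) hq]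
    simp
  have h_i := h_s.mono hsub
  have u1_i := u1_s.mono hsub
  have u2_i := u2_s.mono hsub
  have hdot_i := hdot_s.mono hsub
  have hddot_i : SmoothOnSlab hddot (Set.Ioo 0 T) := hddot_def ▸
    ((hdot_i.pT hIoo).add (u1_i.mul (hdot_i.pX hIoo.uniqueDiffOn))).add
      (u2_i.mul (hdot_i.pY hIoo.uniqueDiffOn))
  have p_i : SmoothOnSlab p (Set.Ioo 0 T) :=
    (((SmoothOnSlab.const (g / 2)).mul (h_i.mul h_i)).add
      (((SmoothOnSlab.const (1 / 3)).mul (h_i.mul h_i)).mul hddot_i)).congr fun t _ x y => by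
        rw [p_def]; ring
  set e : ℝ → ℝ → ℝ → ℝ := fun t x y =>
    h t x y * (u1 t x y * u1 t x y + u2 t x y * u2 t x y) * (1 / 2)
      + h t x y * (hdot t x y * hdot t x y) * (1 / 6)
      + (h t x y + -hinf) * (h t x y + -hinf) * (g / 2) with e_def
  have e_s : SmoothOnSlab e (Set.Icc 0 T) :=
    (((h_s.mul ((u1_s.mul u1_s).add (u2_s.mul u2_s))).mul (.const _)).add
      ((h_s.mul (hdot_s.mul hdot_s)).mul (.const _))).add
      (((h_s.add (.const _)).mul (h_s.add (.const _))).mul (.const _))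
  have e_i := e_s.mono hsub
  have henergy : ∀ t x y, h t x y * ((u1 t x y) ^ 2 + (u2 t x y) ^ 2) / 2
      + 3 * (σ t x y) ^ 2 / (2 * (h t x y) ^ 3) + g * (h t x y - hinf) ^ 2 / 2 = e t x y := by
    intro t x y
    have hne := (h_pos t x y).ne'
    simp only [e_def, σ_def]
    field_simp
    ring
  have pcoef_i : SmoothOnSlab (fun t x y => e t x y + p t x y + -(g * hinf ^ 2 / 2))
      (Set.Ioo 0 T) := (e_i.add p_i).add (.const _)
  simp_rw [henergy]
  refine SmoothOnSlab.integral_eq_of_conservation_law K_compact e_s (pcoef_i.mul u1_i)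
    (pcoef_i.mul u2_i) (fun t ht q hq => ?_) (fun t ht q hq => ?_) (fun t ht q hq => ?_)
    fun t ht x y => ?_
  · simp [e_def, h_off t ht q hq, u1_off t ht q hq, u2_off t ht q hq, hdot_off t ht q hq]
  · simp [u1_off t (hsub ht) q hq]
  · simp [u2_off t (hsub ht) q hq]
  have hT := h_i.hasDerivAt_pT hIoo ht x y
  have hX := h_i.hasDerivAt_pX ht x y
  have hY := h_i.hasDerivAt_pY ht x y
  have u1T := u1_i.hasDerivAt_pT hIoo ht x y
  have u1X := u1_i.hasDerivAt_pX ht x y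
  have u1Y := u1_i.hasDerivAt_pY ht x y
  have u2T := u2_i.hasDerivAt_pT hIoo ht x y
  have u2X := u2_i.hasDerivAt_pX ht x y
  have u2Y := u2_i.hasDerivAt_pY ht x y
  have dT := hdot_i.hasDerivAt_pT hIoo ht x y
  have dX := hdot_i.hasDerivAt_pX ht x y
  have dY := hdot_i.hasDerivAt_pY ht x y
  have pX' := p_i.hasDerivAt_pX ht x y
  have pY' := p_i.hasDerivAt_pY ht x y
  have eX := e_i.hasDerivAt_pX ht x y
  have eY := e_i.hasDerivAt_pY ht x y
  have eT_eq : pT e t x y = _ :=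
    ((((hT.mul ((u1T.mul u1T).add (u2T.mul u2T))).mul_const (1 / 2)).add
      ((hT.mul (dT.mul dT)).mul_const (1 / 6))).add
      (((hT.add_const (-hinf)).mul (hT.add_const (-hinf))).mul_const (g / 2))).deriv
  have eX_eq : pX e t x y = _ :=
    ((((hX.mul ((u1X.mul u1X).add (u2X.mul u2X))).mul_const (1 / 2)).add
      ((hX.mul (dX.mul dX)).mul_const (1 / 6))).add
      (((hX.add_const (-hinf)).mul (hX.add_const (-hinf))).mul_const (g / 2))).deriv
  have eY_eq : pY e t x y = _ :=
    ((((hY.mul ((u1Y.mul u1Y).add (u2Y.mul u2Y))).mul_const (1 / 2)).add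
      ((hY.mul (dY.mul dY)).mul_const (1 / 6))).add
      (((hY.add_const (-hinf)).mul (hY.add_const (-hinf))).mul_const (g / 2))).deriv
  have FX_eq : pX (fun t x y => (e t x y + p t x y + -(g * hinf ^ 2 / 2)) * u1 t x y) t x y
      = _ := (((eX.add pX').add_const _).mul u1X).deriv
  have GY_eq : pY (fun t x y => (e t x y + p t x y + -(g * hinf ^ 2 / 2)) * u2 t x y) t x y
      = _ := (((eY.add pY').add_const _).mul u2Y).deriv
  have m1T : pT (fun t x y => h t x y * u1 t x y) t x y = _ := (hT.mul u1T).deriv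
  have m1X : pX (fun t x y => h t x y * u1 t x y * u1 t x y + p t x y) t x y = _ :=
    (((hX.mul u1X).mul u1X).add pX').deriv
  have m1Y : pY (fun t x y => h t x y * u1 t x y * u2 t x y) t x y = _ :=
    ((hY.mul u1Y).mul u2Y).deriv
  have m2T : pT (fun t x y => h t x y * u2 t x y) t x y = _ := (hT.mul u2T).deriv
  have m2X : pX (fun t x y => h t x y * u2 t x y * u1 t x y) t x y = _ :=
    ((hX.mul u2X).mul u1X).deriv
  have m2Y : pY (fun t x y => h t x y * u2 t x y * u2 t x y + p t x y) t x y = _ :=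
    (((hY.mul u2Y).mul u2Y).add pY').deriv
  have m1 := mom1 t (hsub ht) x y
  have m2 := mom2 t (hsub ht) x y
  rw [m1T, m1X, m1Y] at m1
  rw [m2T, m2X, m2Y] at m2
  rw [FX_eq, GY_eq, eT_eq, eX_eq, eY_eq]
  have hd : hdot t x y = pT h t x y + u1 t x y * pX h t x y + u2 t x y * pY h t x y := by
    rw [hdot_def]
  have hdd : hddot t x y
      = pT hdot t x y + u1 t x y * pX hdot t x y + u2 t x y * pY hdot t x y := by
    rw [hddot_def]
  have hp : p t x y = g * (h t x y) ^ 2 / 2 + (h t x y) ^ 2 / 3 * hddot t x y := by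
    rw [p_def]
  have hdiv := hdot_eq t (hsub ht) x y
  simp only [Pi.mul_apply, Pi.add_apply] at m1 m2 ⊢
  simp only [e_def]
  linear_combination
    ((u1 t x y ^ 2 + u2 t x y ^ 2) / 2 + hdot t x y ^ 2 / 6 + g * h t x y / 2 - g * hinf
        - (u1 t x y ^ 2 + u2 t x y ^ 2)) * (hdiv - hd)
      + u1 t x y * m1 + u2 t x y * m2 - h t x y * hdot t x y / 3 * hdd
      - g * h t x y / 2 * hd + (pX u1 t x y + pY u2 t x y) * hp
      + (g * h t x y / 2 + h t x y * hddot t x y / 3) * hdiv
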